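/- Let k be a field of characteristic different from 2 and let L be a finite-dimensional simple Lie algebra over k that is generated by its pure extremal elements. Then for every inner ideal I of L with I ≠ L one has ⁅I, I⁆ = 0, and moreover every nonzero element x of I is ad-nilpotent of index exactly 3, i.e. (ad_x)³ = 0 and (ad_x)² ≠ 0. -/

import Mathlib

/-- A `k`-subspace `I` of a Lie algebra `L` is an inner ideal if
`⁅x, ⁅y, z⁆⁆ ∈ I` for all `x, y ∈ I` and `z ∈ L`. -/
def IsInnerIdeal (k : Type*) {L : Type*} [Field k] [LieRing L] [LieAlgebra k L]
    (I : Submodule k L) : Prop :=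
  ∀ x ∈ I, ∀ y ∈ I, ∀ z : L, ⁅x, ⁅y, z⁆⁆ ∈ I

/-- `x` is extremal: `x ≠ 0` and `⁅x, ⁅x, z⁆⁆ ∈ k·x` for all `z`. -/
def IsExtremal (k : Type*) {L : Type*} [Field k] [LieRing L] [LieAlgebra k L] (x : L) : Prop :=
  x ≠ 0 ∧ ∀ z : L, ⁅x, ⁅x, z⁆⁆ ∈ Submodule.span k ({x} : Set L)

/-- `x` is a sandwich: `⁅x, ⁅x, z⁆⁆ = 0` for all `z`. -/
def IsSandwich {L : Type*} [LieRing L] (x : L) : Prop :=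
  ∀ z : L, ⁅x, ⁅x, z⁆⁆ = 0

/-- `x` is pure extremal: extremal but not a sandwich. -/
def IsPureExtremal (k : Type*) {L : Type*} [Field k] [LieRing L] [LieAlgebra k L] (x : L) : Prop :=
  IsExtremal k x ∧ ¬ IsSandwich x

section InnerIdeals

variable {k L : Type*} [Field k] [LieRing L] [LieAlgebra k L]

/-- A nonzero subspace stable under bracketing with a generating set of a simple Lie algebra is
the whole algebra. -/
theorem eq_top_of_lie_generators_mem [LieAlgebra.IsSimple k L] {S : Set L}
    (hS : LieSubalgebra.lieSpan k L S = ⊤) (A : Submodule k L)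
    (hA : ∀ y ∈ S, ∀ a ∈ A, ⁅y, a⁆ ∈ A) {a : L} (ha : a ∈ A) (ha0 : a ≠ 0) : A = ⊤ := by
  have key : ∀ z : L, ∀ a ∈ A, ⁅z, a⁆ ∈ A := by
    intro z
    have hz : z ∈ LieSubalgebra.lieSpan k L S := hS ▸ LieSubalgebra.mem_top z
    induction hz using LieSubalgebra.lieSpan_induction with
    | mem y hy => exact hA y hy
    | zero => intro a _; simp
    | smul c x _ hx => intro a ha; rw [smul_lie]; exact A.smul_mem c (hx a ha)
    | add x y _ _ hx hy => intro a ha; rw [add_lie]; exact A.add_mem (hx a ha) (hy a ha)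
    | lie x y _ _ hx hy =>
      intro a ha
      rw [lie_lie]
      exact A.sub_mem (hx _ (hy a ha)) (hy _ (hx a ha))
  let B : LieIdeal k L := { A with lie_mem := fun {x m} hm => key x m hm }
  have hB : B.toSubmodule = A := rfl
  rcases LieAlgebra.IsSimple.eq_bot_or_eq_top (R := k) B with h | h
  · have : a ∈ B := ha
    rw [h, LieSubmodule.mem_bot] at this
    exact absurd this ha0
  · rw [← hB, h, LieSubmodule.top_toSubmodule]

/-- An extremal element admits a functional with `⁅x, ⁅x, z⁆⁆ = 2 g(z) x`. -/
theorem IsExtremal.exists_form (hchar : (2 : k) ≠ 0) {x : L} (hx : IsExtremal k x) :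
    ∃ g : L → k, ∀ z, ⁅x, ⁅x, z⁆⁆ = (2 * g z) • x := by
  have h : ∀ z, ∃ c : k, c • x = ⁅x, ⁅x, z⁆⁆ := fun z => Submodule.mem_span_singleton.1 (hx.2 z)
  choose c hc using h
  exact ⟨fun z => c z / 2, fun z => by rw [mul_div_cancel₀ _ hchar, hc]⟩

theorem lie_lie_lie_lie_form (hchar : (2 : k) ≠ 0) {x : L} {g : L → k}
    (hg : ∀ z, ⁅x, ⁅x, z⁆⁆ = (2 * g z) • x) (y z : L) :
    ⁅⁅x, y⁆, ⁅x, z⁆⁆ = g ⁅y, z⁆ • x + g z • ⁅x, y⁆ - g y • ⁅x, z⁆ := by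
  have h := hg ⁅y, z⁆
  rw [leibniz_lie x y z, lie_add, leibniz_lie x ⁅x, y⁆ z, leibniz_lie x y ⁅x, z⁆, hg, hg,
    smul_lie, lie_smul, ← lie_skew y x] at h
  refine smul_right_injective L hchar ?_
  simp only
  linear_combination (norm := module) h

/-- Premet's identity for `⁅x, ⁅y, ⁅x, z⁆⁆⁆`. -/
theorem lie_lie_lie_form (hchar : (2 : k) ≠ 0) {x : L} {g : L → k}
    (hg : ∀ z, ⁅x, ⁅x, z⁆⁆ = (2 * g z) • x) (y z : L) :
    ⁅x, ⁅y, ⁅x, z⁆⁆⁆ = g ⁅y, z⁆ • x - g z • ⁅x, y⁆ - g y • ⁅x, z⁆ := by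
  rw [leibniz_lie x y, lie_lie_lie_lie_form hchar hg, hg, lie_smul, ← lie_skew y x]
  module

/-- The symmetry of the extremal form, as a vanishing statement. -/
theorem IsExtremal.lie_lie_ne_zero_symm {x y : L} (hchar : (2 : k) ≠ 0) (hy : IsExtremal k y)
    (h : ⁅y, ⁅y, x⁆⁆ ≠ 0) : ⁅x, ⁅x, y⁆⁆ ≠ 0 := by
  intro h0
  obtain ⟨g, hg⟩ := hy.exists_form hchar
  have h1 := leibniz_lie x y ⁅x, y⁆
  rw [h0, lie_self, lie_zero, ← lie_skew x y, lie_neg, lie_neg, hg, lie_smul, zero_add,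
    neg_eq_zero, smul_eq_zero] at h1
  rcases h1 with h1 | h1
  · exact h (by rw [hg, h1, zero_smul])
  · exact h (by rw [← lie_skew y x, h1, neg_zero, lie_zero])

/-- The exponential of an extremal element. -/
noncomputable def extremalExp (k : Type*) {L : Type*} [Field k] [LieRing L] [LieAlgebra k L]
    (y z : L) : L :=
  z + ⁅y, z⁆ + (2⁻¹ : k) • ⁅y, ⁅y, z⁆⁆

theorem extremalExp_eq (hchar : (2 : k) ≠ 0) {y : L} {g : L → k}
    (hg : ∀ z, ⁅y, ⁅y, z⁆⁆ = (2 * g z) • y) (z : L) :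
    extremalExp k y z = z + ⁅y, z⁆ + g z • y := by
  rw [extremalExp, hg, smul_smul, inv_mul_cancel_left₀ hchar]

theorem extremalExp_lie (hchar : (2 : k) ≠ 0) {y : L} (hy : IsExtremal k y) (z w : L) :
    extremalExp k y ⁅z, w⁆ = ⁅extremalExp k y z, extremalExp k y w⁆ := by
  obtain ⟨g, hg⟩ := hy.exists_form hchar
  simp only [extremalExp_eq hchar hg, add_lie, lie_add, smul_lie, lie_smul, lie_self,
    lie_lie_lie_lie_form hchar hg, hg]
  rw [← lie_skew ⁅y, z⁆ y, hg, leibniz_lie y z w, ← lie_skew z y]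
  module

theorem extremalExp_neg_extremalExp (hchar : (2 : k) ≠ 0) {y : L} (hy : IsExtremal k y) (z : L) :
    extremalExp k (-y) (extremalExp k y z) = z := by
  obtain ⟨g, hg⟩ := hy.exists_form hchar
  have h3 : ⁅y, ⁅y, ⁅y, z⁆⁆⁆ = 0 := by rw [hg z, lie_smul, lie_self, smul_zero]
  simp only [extremalExp, neg_lie, lie_neg, neg_neg, lie_add, lie_smul, h3, smul_zero,
    neg_zero, add_zero]
  match_scalars <;> field_simp <;> ring

theorem IsExtremal.neg {y : L} (hy : IsExtremal k y) : IsExtremal k (-y) := by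
  refine ⟨neg_ne_zero.2 hy.1, fun z => ?_⟩
  have h : -y ∈ Submodule.span k {-y} := Submodule.mem_span_singleton_self _
  have hle : Submodule.span k {y} ≤ Submodule.span k {-y} := by
    rw [Submodule.span_singleton_le_iff_mem]
    exact neg_mem_iff.1 h
  simpa only [neg_lie, lie_neg, neg_neg] using hle (hy.2 z)

theorem extremalExp_extremalExp_neg (hchar : (2 : k) ≠ 0) {y : L} (hy : IsExtremal k y) (z : L) :
    extremalExp k y (extremalExp k (-y) z) = z := by
  simpa using extremalExp_neg_extremalExp hchar hy.neg z

theorem extremalExp_smul (y z : L) (c : k) :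
    extremalExp k y (c • z) = c • extremalExp k y z := by
  simp only [extremalExp, lie_smul]
  module

theorem extremalExp_zero (y : L) : extremalExp k y 0 = 0 := by
  simp [extremalExp]

theorem extremalExp_eq_zero_iff (hchar : (2 : k) ≠ 0) {y : L} (hy : IsExtremal k y) {z : L} :
    extremalExp k y z = 0 ↔ z = 0 := by
  refine ⟨fun h => ?_, fun h => by rw [h, extremalExp_zero]⟩
  rw [← extremalExp_neg_extremalExp hchar hy z, h, extremalExp_zero]

/-- `extremalExp k y` preserves pure extremal elements. -/
theorem IsPureExtremal.extremalExp (hchar : (2 : k) ≠ 0) {y e : L} (hy : IsExtremal k y)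
    (he : IsPureExtremal k e) : IsPureExtremal k (extremalExp k y e) := by
  have key : ∀ z, ⁅_root_.extremalExp k y e, ⁅_root_.extremalExp k y e, z⁆⁆ =
      _root_.extremalExp k y ⁅e, ⁅e, _root_.extremalExp k (-y) z⁆⁆ := fun z => by
    rw [extremalExp_lie hchar hy, extremalExp_lie hchar hy, extremalExp_extremalExp_neg hchar hy]
  refine ⟨⟨(extremalExp_eq_zero_iff hchar hy).not.2 he.1.1, fun z => ?_⟩, fun h => he.2 fun z => ?_⟩
  · obtain ⟨c, hc⟩ := Submodule.mem_span_singleton.1 (he.1.2 (_root_.extremalExp k (-y) z))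
    rw [key, ← hc, extremalExp_smul]
    exact Submodule.smul_mem _ _ (Submodule.mem_span_singleton_self _)
  · have := h (_root_.extremalExp k y z)
    rwa [key, extremalExp_neg_extremalExp hchar hy, extremalExp_eq_zero_iff hchar hy] at this

/-- The extremal form of a simple Lie algebra generated by pure extremal elements is
nondegenerate. -/
theorem exists_isPureExtremal_lie_lie_ne_zero [LieAlgebra.IsSimple k L] (hchar : (2 : k) ≠ 0)
    (hgen : LieSubalgebra.lieSpan k L {x : L | IsPureExtremal k x} = ⊤) {d : L} (hd : d ≠ 0) :
    ∃ e : L, IsPureExtremal k e ∧ ⁅e, ⁅e, d⁆⁆ ≠ 0 := by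
  by_contra! hcon
  let R : Submodule k L :=
    { carrier := {x : L | ∀ e : L, IsPureExtremal k e → ⁅e, ⁅e, x⁆⁆ = 0}
      zero_mem' := fun e _ => by simp
      add_mem' := fun {a b} ha hb e he => by simp [ha e he, hb e he]
      smul_mem' := fun c a ha e he => by simp [ha e he] }
  have hR : R = ⊤ := by
    refine eq_top_of_lie_generators_mem hgen R (fun y hy a ha => ?_) (a := d) hcon hd
    have hexp : extremalExp k y a = a + ⁅y, a⁆ := by simp [extremalExp, ha y hy]
    have hmem : extremalExp k y a ∈ R := fun e he => by
      have h := ha _ (he.extremalExp hchar hy.1.neg)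
      rw [← extremalExp_eq_zero_iff hchar hy.1, extremalExp_lie hchar hy.1,
        extremalExp_lie hchar hy.1, extremalExp_extremalExp_neg hchar hy.1] at h
      exact h
    rw [hexp] at hmem
    exact (R.add_mem_iff_right ha).1 hmem
  have hempty : {x : L | IsPureExtremal k x} = ∅ := by
    refine Set.eq_empty_of_forall_notMem fun e he => he.2 fun z => ?_
    have hz : z ∈ R := hR ▸ Submodule.mem_top
    exact hz e he
  rw [hempty, LieSubalgebra.span_empty] at hgen
  have : d ∈ (⊥ : LieSubalgebra k L) := hgen ▸ LieSubalgebra.mem_top d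
  exact hd ((LieSubalgebra.mem_bot d).1 this)

theorem not_isSandwich_of_ne_zero [LieAlgebra.IsSimple k L] (hchar : (2 : k) ≠ 0)
    (hgen : LieSubalgebra.lieSpan k L {x : L | IsPureExtremal k x} = ⊤) {x : L} (hx : x ≠ 0) :
    ¬ IsSandwich x := by
  intro hs
  obtain ⟨e, he, hne⟩ := exists_isPureExtremal_lie_lie_ne_zero hchar hgen hx
  exact he.1.lie_lie_ne_zero_symm hchar hne (hs e)

/-- The elements `d` with `⁅d, L⁆ ⊆ I`. -/
def lieTransporter (I : Submodule k L) : Submodule k L where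
  carrier := {d | ∀ z : L, ⁅d, z⁆ ∈ I}
  zero_mem' z := by simp
  add_mem' ha hb z := by rw [add_lie]; exact I.add_mem (ha z) (hb z)
  smul_mem' c a ha z := by rw [smul_lie]; exact I.smul_mem c (ha z)

theorem IsInnerIdeal.lie_mem_lieTransporter {I : Submodule k L} (hI : IsInnerIdeal k I) {x y : L}
    (hx : x ∈ I) (hy : y ∈ I) : ⁅x, y⁆ ∈ lieTransporter I := fun z => by
  rw [lie_lie]
  exact I.sub_mem (hI x hx y hy z) (hI y hy x hx z)

theorem IsInnerIdeal.mem_inf_lieTransporter {I : Submodule k L} (hI : IsInnerIdeal k I)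
    {d e : L} (hd : d ∈ lieTransporter I) (he : IsExtremal k e) (hde : ⁅e, ⁅e, d⁆⁆ ≠ 0) :
    e ∈ I ∧ e ∈ lieTransporter I := by
  obtain ⟨c, hc⟩ := Submodule.mem_span_singleton.1 (he.2 d)
  have hc0 : c ≠ 0 := by rintro rfl; exact hde (by rw [← hc, zero_smul])
  have hu : ⁅e, d⁆ ∈ I := by rw [← lie_skew]; exact I.neg_mem (hd e)
  have hue : ⁅⁅e, d⁆, e⁆ = -(c • e) := by rw [← lie_skew, hc]
  have heI : e ∈ I := by
    have h := hI _ hu _ hu e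
    rw [hue, lie_neg, lie_smul, hue, smul_neg, neg_neg, smul_smul] at h
    exact (I.smul_mem_iff (mul_ne_zero hc0 hc0)).1 h
  refine ⟨heI, ?_⟩
  have h := hI.lie_mem_lieTransporter heI hu
  rw [← hc] at h
  exact (Submodule.smul_mem_iff _ hc0).1 h

theorem IsInnerIdeal.mem_and_lie_mem_lieTransporter [LieAlgebra.IsSimple k L]
    (hchar : (2 : k) ≠ 0)
    (hgen : LieSubalgebra.lieSpan k L {x : L | IsPureExtremal k x} = ⊤)
    {I : Submodule k L} (hI : IsInnerIdeal k I) {e : L} (he : IsExtremal k e)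
    (heJ : e ∈ lieTransporter I) : e ∈ I ∧ ∀ z, ⁅e, z⁆ ∈ lieTransporter I := by
  obtain ⟨f, hf, hne⟩ := exists_isPureExtremal_lie_lie_ne_zero hchar hgen he.1
  obtain ⟨hfI, hfJ⟩ := hI.mem_inf_lieTransporter heJ hf.1 hne
  have hne' := hf.1.lie_lie_ne_zero_symm hchar hne
  have heI := (hI.mem_inf_lieTransporter hfJ he hne').1
  refine ⟨heI, fun z => ?_⟩
  obtain ⟨g, hg⟩ := he.exists_form hchar
  have hgf : g f ≠ 0 := fun h => hne' (by rw [hg, h, mul_zero, zero_smul])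
  have h := hI.lie_mem_lieTransporter heI (hfJ ⁅e, z⁆)
  rw [lie_lie_lie_form hchar hg, Submodule.sub_mem_iff_right] at h
  · exact (Submodule.smul_mem_iff _ hgf).1 h
  · exact Submodule.sub_mem _ (Submodule.smul_mem _ _ heJ)
      (Submodule.smul_mem _ _ (hI.lie_mem_lieTransporter heI hfI))

theorem IsInnerIdeal.eq_top_of_lieTransporter_ne_bot [LieAlgebra.IsSimple k L]
    (hchar : (2 : k) ≠ 0)
    (hgen : LieSubalgebra.lieSpan k L {x : L | IsPureExtremal k x} = ⊤)
    {I : Submodule k L} (hI : IsInnerIdeal k I) {d : L} (hd : d ∈ lieTransporter I)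
    (hd0 : d ≠ 0) : I = ⊤ := by
  let A : Submodule k L := Submodule.span k {e | IsPureExtremal k e ∧ e ∈ lieTransporter I}
  have hAI : A ≤ I := Submodule.span_le.2 fun e he =>
    (hI.mem_and_lie_mem_lieTransporter hchar hgen he.1.1 he.2).1
  obtain ⟨e, he, hne⟩ := exists_isPureExtremal_lie_lie_ne_zero hchar hgen hd0
  have heA : e ∈ A := Submodule.subset_span ⟨he, (hI.mem_inf_lieTransporter hd he.1 hne).2⟩
  refine top_le_iff.1 (le_of_eq_of_le (Eq.symm ?_) hAI)
  refine eq_top_of_lie_generators_mem hgen A (fun y hy a ha => ?_) heA he.1.1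
  induction ha using Submodule.span_induction with
  | zero => simp
  | add a b _ _ ha hb => rw [lie_add]; exact A.add_mem ha hb
  | smul c a _ ha => rw [lie_smul]; exact A.smul_mem c ha
  | mem a ha =>
    obtain ⟨haP, haJ⟩ := ha
    have haA : a ∈ A := Submodule.subset_span ⟨haP, haJ⟩
    have hya : ⁅y, a⁆ ∈ lieTransporter I := by
      rw [← lie_skew]
      exact Submodule.neg_mem _ ((hI.mem_and_lie_mem_lieTransporter hchar hgen haP.1 haJ).2 y)
    have hq : ⁅y, ⁅y, a⁆⁆ ∈ lieTransporter I ∧ ⁅y, ⁅y, a⁆⁆ ∈ A := by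
      by_cases h0 : ⁅y, ⁅y, a⁆⁆ = 0
      · rw [h0]; exact ⟨Submodule.zero_mem _, A.zero_mem⟩
      · have hyJ := (hI.mem_inf_lieTransporter haJ hy.1 h0).2
        obtain ⟨c, hc⟩ := Submodule.mem_span_singleton.1 (hy.1.2 a)
        rw [← hc]
        exact ⟨Submodule.smul_mem _ _ hyJ, A.smul_mem c (Submodule.subset_span ⟨hy, hyJ⟩)⟩
    have hexp : extremalExp k y a ∈ A := Submodule.subset_span ⟨haP.extremalExp hchar hy.1,
      Submodule.add_mem _ (Submodule.add_mem _ haJ hya) (Submodule.smul_mem _ _ hq.1)⟩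
    rwa [extremalExp, A.add_mem_iff_left (A.smul_mem _ hq.2), A.add_mem_iff_right haA] at hexp

end InnerIdeals

/-- Benkart's theorem: over a field of characteristic `≠ 2`, in a finite-dimensional
simple Lie algebra generated by its pure extremal elements, every proper inner ideal `I`
satisfies `⁅I, I⁆ = 0`, and every nonzero element of `I` is ad-nilpotent of index
exactly `3`. -/
theorem stmt0 {k L : Type*} [Field k] [LieRing L] [LieAlgebra k L]
    [FiniteDimensional k L] [LieAlgebra.IsSimple k L]
    (hchar : (2 : k) ≠ 0)
    (hgen : LieSubalgebra.lieSpan k L {x : L | IsPureExtremal k x} = ⊤)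
    (I : Submodule k L) (hI : IsInnerIdeal k I) (hproper : I ≠ ⊤) :
    (∀ x ∈ I, ∀ y ∈ I, ⁅x, y⁆ = (0 : L)) ∧
      ∀ x ∈ I, x ≠ 0 →
        (LieAlgebra.ad k L x) ^ 3 = 0 ∧ (LieAlgebra.ad k L x) ^ 2 ≠ 0 := by
  have hab : ∀ x ∈ I, ∀ y ∈ I, ⁅x, y⁆ = (0 : L) := fun x hx y hy => by
    by_contra h
    exact hproper
      (hI.eq_top_of_lieTransporter_ne_bot hchar hgen (hI.lie_mem_lieTransporter hx hy) h)
  refine ⟨hab, fun x hx hx0 => ⟨?_, fun h => ?_⟩⟩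
  · ext z
    simpa [pow_succ] using hab x hx _ (hI x hx x hx z)
  · refine not_isSandwich_of_ne_zero hchar hgen hx0 fun z => ?_
    simpa [pow_succ] using LinearMap.congr_fun h z
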